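/- A finite group G satisfies the intersection condition if and only if G is cyclic of prime power order, or an elementary abelian 2-group, or a dihedral 2-group, or cyclic of order 2p, or dihedral of order 2p^n or of order 4p, where p is an odd prime. -/

import Mathlib

/-!
The intersection condition says that the subgroups `⟨x⟩`, for `x` of order greater than `2`, form a
chain. In a finite group an element `c` of maximal order then generates a subgroup containing every
element of order greater than `2`. Suppose `c ^ 2 ≠ 1`. An element `b` outside `⟨c⟩` and the product
`b * c` are both involutions, so `b` inverts `c`. A product of two elements outside `⟨c⟩` therefore
centralises `c`, hence lies in `⟨c⟩`, and `G` is either `⟨c⟩` or dihedral with rotation subgroup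
`⟨c⟩`.

Inside `⟨c⟩` containment of cyclic subgroups is divisibility of orders, so the condition becomes:
the divisors of `orderOf c` greater than `2` form a chain under divisibility. If this holds for
`n = p ^ k * m`, where `p` is an odd prime, `p ∤ m` and `k ≥ 1`, then `m ≤ 2`, since otherwise `p`
and `m` are incomparable, and `k = 1` if `m = 2`, since otherwise `p ^ 2` and `2 * p` are.
-/

/-- A finite group `G` satisfies the intersection condition if it has no subgroups
`H` and `K` such that both `H \ K` and `K \ H` contain an element of order
greater than 2. -/
def satisfiesIC (G : Type*) [Group G] : Prop :=
  ¬ ∃ H K : Subgroup G,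
      (∃ x ∈ H, x ∉ K ∧ 2 < orderOf x) ∧ (∃ y ∈ K, y ∉ H ∧ 2 < orderOf y)

section Arithmetic

/-- The divisors of `n` greater than `2` form a chain under divisibility: the intersection
condition for a cyclic group of order `n`, read off from the orders of its subgroups. -/
def DivisorsGTTwoChain (n : ℕ) : Prop :=
  IsChain (· ∣ ·) {d | d ∣ n ∧ 2 < d}

variable {p m k n : ℕ}

lemma divisorsGTTwoChain_prime_pow (hp : p.Prime) (k : ℕ) : DivisorsGTTwoChain (p ^ k) := by
  rintro a ⟨ha, -⟩ b ⟨hb, -⟩ -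
  obtain ⟨i, -, rfl⟩ := (Nat.dvd_prime_pow hp).1 ha
  obtain ⟨j, -, rfl⟩ := (Nat.dvd_prime_pow hp).1 hb
  exact (le_total i j).imp (pow_dvd_pow p) (pow_dvd_pow p)

lemma divisorsGTTwoChain_two_mul_prime (hp : p.Prime) : DivisorsGTTwoChain (2 * p) := by
  have eq_or_eq {d : ℕ} (hd : d ∣ 2 * p) (hd2 : 2 < d) : d = p ∨ d = 2 * p := by
    obtain ⟨a, b, ha, hb, rfl⟩ := Nat.dvd_mul.1 hd
    rcases (Nat.dvd_prime Nat.prime_two).1 ha with rfl | rfl <;>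
      rcases (Nat.dvd_prime hp).1 hb with rfl | rfl <;> simp_all
  rintro a ⟨ha, ha2⟩ b ⟨hb, hb2⟩ -
  rcases eq_or_eq ha ha2 with rfl | rfl <;> rcases eq_or_eq hb hb2 with rfl | rfl <;> simp

lemma not_divisorsGTTwoChain_zero : ¬ DivisorsGTTwoChain 0 := fun h => by
  have := h.total (x := 3) (y := 4) (by simp) (by simp)
  omega

lemma DivisorsGTTwoChain.cofactor_le_two (h : DivisorsGTTwoChain (p ^ k * m)) (hp : p.Prime)
    (hp2 : 2 < p) (hk : k ≠ 0) (hpm : ¬ p ∣ m) : m ≤ 2 := by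
  by_contra! hm
  rcases h.total ⟨(dvd_pow_self p hk).mul_right m, hp2⟩ ⟨dvd_mul_left m _, hm⟩ with hdvd | hdvd
  · exact hpm hdvd
  · rcases (Nat.dvd_prime hp).1 hdvd with rfl | rfl
    · omega
    · exact hpm dvd_rfl

lemma DivisorsGTTwoChain.exponent_le_one (h : DivisorsGTTwoChain (p ^ k * 2)) (hp2 : 2 < p)
    (hpodd : Odd p) : k ≤ 1 := by
  by_contra! hk
  have hcop : Nat.Coprime 2 p := hpodd.coprime_two_left
  rcases h.total ⟨(pow_dvd_pow p hk).mul_right 2, by nlinarith⟩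
    ⟨mul_dvd_mul_right (dvd_pow_self p (by omega)) 2, by omega⟩ with hdvd | hdvd
  · have : p ∣ 2 := Nat.dvd_of_mul_dvd_mul_left (by omega) (sq p ▸ hdvd)
    exact absurd (Nat.le_of_dvd two_pos this) (by omega)
  · have : 2 = 1 := (hcop.pow_right 2).eq_one_of_dvd (dvd_of_mul_left_dvd hdvd)
    omega

theorem divisorsGTTwoChain_iff : DivisorsGTTwoChain n ↔
    (∃ p k, p.Prime ∧ n = p ^ k) ∨ ∃ p, p.Prime ∧ Odd p ∧ n = 2 * p := by
  constructor
  · intro h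
    obtain ⟨k, hk⟩ | ⟨p, hp, hpn, hodd⟩ := n.eq_two_pow_or_exists_odd_prime_and_dvd
    · exact .inl ⟨2, k, Nat.prime_two, hk⟩
    have hn : n ≠ 0 := by
      rintro rfl
      exact not_divisorsGTTwoChain_zero h
    have hp2 : 2 < p := hp.two_le.lt_of_ne' (hodd.ne_two_of_dvd_nat dvd_rfl)
    obtain ⟨k, m, hpm, rfl⟩ := Nat.exists_eq_pow_mul_and_not_dvd hn p hp.ne_one
    have hk : k ≠ 0 := by
      rintro rfl
      exact hpm (by simpa using hpn)
    have hm : m ≤ 2 := h.cofactor_le_two hp hp2 hk hpm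
    interval_cases m
    · simp at hn
    · exact .inl ⟨p, k, hp, mul_one _⟩
    · obtain rfl : k = 1 := by have := h.exponent_le_one hp2 hodd; omega
      exact .inr ⟨p, hp, hodd, by ring⟩
  · rintro (⟨p, k, hp, rfl⟩ | ⟨p, hp, -, rfl⟩)
    · exact divisorsGTTwoChain_prime_pow hp k
    · exact divisorsGTTwoChain_two_mul_prime hp

end Arithmetic

section Cyclic

open Subgroup

variable {G : Type*} [Group G] {c x y : G}

lemma sq_eq_one_iff_orderOf_le_two (hx : IsOfFinOrder x) : x ^ 2 = 1 ↔ orderOf x ≤ 2 := by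
  refine ⟨orderOf_le_of_pow_eq_one two_pos, fun h => orderOf_dvd_iff_pow_eq_one.1 ?_⟩
  have := hx.orderOf_pos
  interval_cases orderOf x <;> norm_num

lemma mem_zpowers_iff_orderOf_dvd [IsCyclic G] [Finite G] :
    x ∈ zpowers y ↔ orderOf x ∣ orderOf y := by
  refine ⟨orderOf_dvd_of_mem_zpowers, fun h => ?_⟩
  let : CommGroup G := IsCyclic.commGroup
  have hle : zpowers y ≤ (powMonoidHom (orderOf y)).ker :=
    zpowers_le.2 (pow_orderOf_eq_one y)
  have hcard : Nat.card (powMonoidHom (orderOf y) : G →* G).ker = Nat.card (zpowers y) := by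
    rw [IsCyclic.card_powMonoidHom_ker, Nat.gcd_eq_right (orderOf_dvd_natCard y), Nat.card_zpowers]
  rw [eq_of_le_of_card_ge hle hcard.le]
  exact orderOf_dvd_iff_pow_eq_one.1 h

lemma mem_zpowers_iff_orderOf_dvd_of_mem_zpowers (hc : IsOfFinOrder c) (hx : x ∈ zpowers c)
    (hy : y ∈ zpowers c) : x ∈ zpowers y ↔ orderOf x ∣ orderOf y := by
  have : Finite (zpowers c) := hc.finite_zpowers
  have := mem_zpowers_iff_orderOf_dvd (x := (⟨x, hx⟩ : zpowers c)) (y := ⟨y, hy⟩)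
  simpa only [mem_zpowers_iff, Subtype.ext_iff, coe_zpow, orderOf_mk] using this

end Cyclic

section IntersectionCondition

open Subgroup

variable {G : Type*} [Group G] {c : G}

lemma satisfiesIC_iff_forall_mem_zpowers :
    satisfiesIC G ↔ ∀ x y : G, 2 < orderOf x → 2 < orderOf y →
      x ∈ zpowers y ∨ y ∈ zpowers x := by
  constructor
  · intro h x y hx hy
    by_contra! hxy
    exact h ⟨zpowers x, zpowers y, ⟨x, mem_zpowers x, hxy.1, hx⟩, ⟨y, mem_zpowers y, hxy.2, hy⟩⟩
  · rintro h ⟨H, K, ⟨x, hxH, hxK, hx⟩, ⟨y, hyK, hyH, hy⟩⟩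
    rcases h x y hx hy with hxy | hyx
    · exact hxK (zpowers_le.2 hyK hxy)
    · exact hyH (zpowers_le.2 hxH hyx)

lemma satisfiesIC_congr {H : Type*} [Group H] (e : G ≃* H) : satisfiesIC G ↔ satisfiesIC H := by
  simp only [satisfiesIC_iff_forall_mem_zpowers, e.surjective.forall, e.orderOf_eq,
    mem_zpowers_iff, ← map_zpow, e.injective.eq_iff]

lemma satisfiesIC_of_forall_sq_eq_one (h : ∀ g : G, g ^ 2 = 1) : satisfiesIC G :=
  fun ⟨_, _, ⟨x, _, _, hx⟩, _⟩ => hx.not_ge (orderOf_le_of_pow_eq_one two_pos (h x))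

lemma satisfiesIC_iff_divisorsGTTwoChain_orderOf (hc : IsOfFinOrder c)
    (hmem : ∀ x : G, 2 < orderOf x → x ∈ zpowers c) :
    satisfiesIC G ↔ DivisorsGTTwoChain (orderOf c) := by
  rw [satisfiesIC_iff_forall_mem_zpowers]
  constructor
  · rintro h a ⟨ha, ha2⟩ b ⟨hb, hb2⟩ -
    have orderOf_a := orderOf_pow_orderOf_div hc.orderOf_pos.ne' ha
    have orderOf_b := orderOf_pow_orderOf_div hc.orderOf_pos.ne' hb
    have := h _ _ (orderOf_a.symm ▸ ha2) (orderOf_b.symm ▸ hb2)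
    rw [← orderOf_a, ← orderOf_b]
    exact this.imp orderOf_dvd_of_mem_zpowers orderOf_dvd_of_mem_zpowers
  · intro h x y hx hy
    rw [mem_zpowers_iff_orderOf_dvd_of_mem_zpowers hc (hmem x hx) (hmem y hy),
      mem_zpowers_iff_orderOf_dvd_of_mem_zpowers hc (hmem y hy) (hmem x hx)]
    exact h.total ⟨orderOf_dvd_of_mem_zpowers (hmem x hx), hx⟩
      ⟨orderOf_dvd_of_mem_zpowers (hmem y hy), hy⟩

lemma satisfiesIC_iff_divisorsGTTwoChain_card [IsCyclic G] [Finite G] :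
    satisfiesIC G ↔ DivisorsGTTwoChain (Nat.card G) := by
  obtain ⟨c, hc⟩ := IsCyclic.exists_generator (α := G)
  rw [← orderOf_eq_card_of_forall_mem_zpowers hc]
  exact satisfiesIC_iff_divisorsGTTwoChain_orderOf (isOfFinOrder_of_finite c) fun x _ => hc x

lemma exists_forall_mem_zpowers_of_satisfiesIC [Finite G] (h : satisfiesIC G) :
    ∃ c : G, ∀ x : G, 2 < orderOf x → x ∈ zpowers c := by
  rw [satisfiesIC_iff_forall_mem_zpowers] at h
  obtain ⟨c, hmax⟩ := Finite.exists_max (orderOf : G → ℕ)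
  refine ⟨c, fun x hx => (h x c hx (hx.trans_le (hmax x))).elim id fun hcx => ?_⟩
  have : zpowers c = zpowers x :=
    eq_of_le_of_card_ge (zpowers_le.2 hcx) (by simpa only [Nat.card_zpowers] using hmax x)
  exact this ▸ mem_zpowers x

end IntersectionCondition

section Dihedral

open Subgroup DihedralGroup

lemma satisfiesIC_dihedralGroup_iff {n : ℕ} [NeZero n] :
    satisfiesIC (DihedralGroup n) ↔ DivisorsGTTwoChain n := by
  have hmem (x : DihedralGroup n) (hx : 2 < orderOf x) : x ∈ zpowers (r 1) := by
    rcases x with i | i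
    · obtain ⟨k, rfl⟩ := ZMod.intCast_surjective i
      exact ⟨k, r_one_zpow k⟩
    · simp at hx
  simpa only [orderOf_r_one] using
    satisfiesIC_iff_divisorsGTTwoChain_orderOf (isOfFinOrder_of_finite (r 1)) hmem

variable {G : Type*} [Group G] {b c g : G} {n : ℕ}

/-- The homomorphism from the dihedral group that restricts to `φ` on rotations and sends the
reflection `sr 0` to an involution `b` inverting the image of `φ`. -/
def dihedralLift (φ : Multiplicative (ZMod n) →* G) (b : G) (hb : b ^ 2 = 1)
    (hφ : ∀ i, SemiconjBy b (φ i) (φ i)⁻¹) : DihedralGroup n →* G :=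
  .mk' (fun
    | r i => φ (.ofAdd i)
    | sr i => b * φ (.ofAdd i)) (by
      have hbb : b * b = 1 := by rw [← sq, hb]
      have move (i j : ZMod n) : φ (.ofAdd i) * (b * φ (.ofAdd j)) = b * φ (.ofAdd (j - i)) := by
        rw [sub_eq_neg_add, ofAdd_add, ofAdd_neg, map_mul, map_inv, ← mul_assoc, ← mul_assoc,
          (hφ _).inv_right.eq, inv_inv]
      rintro (i | i) (j | j)
      · simp only [r_mul_r, ofAdd_add, map_mul]
      · simp only [r_mul_sr, move]
      · simp only [sr_mul_r, ofAdd_add, map_mul, mul_assoc]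
      · simp only [sr_mul_sr, mul_assoc, move]
        rw [← mul_assoc, hbb, one_mul])

section

variable {φ : Multiplicative (ZMod n) →* G} {hb : b ^ 2 = 1}
  {hφ : ∀ i, SemiconjBy b (φ i) (φ i)⁻¹}

lemma dihedralLift_injective (hinj : Function.Injective φ) (hbφ : b ∉ φ.range) :
    Function.Injective (dihedralLift φ b hb hφ) := by
  refine (injective_iff_map_eq_one _).2 ?_
  rintro (i | i) hi
  · have : Multiplicative.ofAdd i = 1 := (map_eq_one_iff φ hinj).1 hi
    rw [ofAdd_eq_one.1 this, r_zero]
  · have : b = (φ (.ofAdd i))⁻¹ := eq_inv_of_mul_eq_one_left hi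
    exact absurd (this ▸ φ.range.inv_mem ⟨_, rfl⟩) hbφ

lemma dihedralLift_surjective (hcover : ∀ g ∉ φ.range, b * g ∈ φ.range) :
    Function.Surjective (dihedralLift φ b hb hφ) := by
  intro g
  by_cases hg : g ∈ φ.range
  · obtain ⟨i, hi⟩ := hg
    exact ⟨r i.toAdd, hi⟩
  · obtain ⟨i, hi⟩ := hcover g hg
    refine ⟨sr i.toAdd, ?_⟩
    calc b * φ i = b ^ 2 * g := by rw [hi, sq, mul_assoc]
      _ = g := by rw [hb, one_mul]

end

lemma exists_injective_zmodHom_range_eq_zpowers (c : G) :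
    ∃ φ : Multiplicative (ZMod (orderOf c)) →* G, Function.Injective φ ∧ φ.range = zpowers c := by
  let e : Multiplicative (ZMod (orderOf c)) ≃* zpowers c :=
    zmodMulEquivOfGenerator (g := ⟨c, mem_zpowers c⟩)
      (fun ⟨_, k, hk⟩ => ⟨k, Subtype.ext hk⟩) (Nat.card_zpowers c)
  refine ⟨(zpowers c).subtype.comp e, Subtype.val_injective.comp e.injective, ?_⟩
  ext x
  calc (∃ i, (e i : G) = x) ↔ ∃ y : zpowers c, (y : G) = x :=
        (e.surjective.exists (p := fun y => (y : G) = x)).symm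
    _ ↔ x ∈ zpowers c := by simp only [Subtype.exists, exists_prop, exists_eq_right]

lemma semiconjBy_inv_of_sq_eq_one (hb : b ^ 2 = 1) (hbc : (b * c) ^ 2 = 1) :
    SemiconjBy b c c⁻¹ := by
  have hb_inv : b⁻¹ = b := inv_eq_of_mul_eq_one_left (sq b ▸ hb)
  have hbc_inv : b * c = (b * c)⁻¹ := eq_inv_of_mul_eq_one_left (sq (b * c) ▸ hbc)
  rw [SemiconjBy, hbc_inv, mul_inv_rev, hb_inv]

lemma mul_mem_of_semiconjBy_inv_of_notMem {K : Subgroup G} (hc : c ^ 2 ≠ 1)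
    (hinv : ∀ g ∉ K, SemiconjBy g c c⁻¹) (hb : b ∉ K) (hg : g ∉ K) : b * g ∈ K := by
  by_contra hbg
  have hcentral : SemiconjBy (b * g) c c := by
    simpa using (hinv b hb).inv_right.mul_left (hinv g hg)
  have : c = c⁻¹ := mul_right_cancel (hcentral.eq.symm.trans (hinv _ hbg).eq)
  exact hc (by rw [sq, ← eq_inv_iff_mul_eq_one, ← this])

theorem isCyclic_or_nonempty_mulEquiv_dihedralGroup (hc : c ^ 2 ≠ 1)
    (hsq : ∀ g ∉ zpowers c, g ^ 2 = 1) :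
    IsCyclic G ∨ Nonempty (G ≃* DihedralGroup (orderOf c)) := by
  by_cases hgen : ∀ g, g ∈ zpowers c
  · exact .inl ⟨c, hgen⟩
  push Not at hgen
  obtain ⟨b, hb⟩ := hgen
  have hinv (g : G) (hg : g ∉ zpowers c) : SemiconjBy g c c⁻¹ :=
    semiconjBy_inv_of_sq_eq_one (hsq g hg)
      (hsq _ fun h => hg ((mul_mem_cancel_right (mem_zpowers c)).1 h))
  obtain ⟨φ, hinj, hrange⟩ := exists_injective_zmodHom_range_eq_zpowers c
  have hφ (i) : SemiconjBy b (φ i) (φ i)⁻¹ := by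
    obtain ⟨k, hk⟩ := hrange ▸ φ.mem_range.2 ⟨i, rfl⟩
    have : c ^ k = φ i := hk
    simpa only [this, inv_zpow] using (hinv b hb).zpow_right k
  refine .inr ⟨(MulEquiv.ofBijective (dihedralLift φ b (hsq b hb) hφ) ⟨?_, ?_⟩).symm⟩
  · exact dihedralLift_injective hinj (hrange ▸ hb)
  · refine dihedralLift_surjective fun g hg => ?_
    rw [hrange] at hg ⊢
    exact mul_mem_of_semiconjBy_inv_of_notMem hc hinv hb hg

end Dihedral

theorem satisfiesIC_iff_divisorsGTTwoChain {G : Type*} [Group G] [Finite G] :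
    satisfiesIC G ↔ (∀ g : G, g ^ 2 = 1) ∨ (IsCyclic G ∧ DivisorsGTTwoChain (Nat.card G)) ∨
      ∃ n, DivisorsGTTwoChain n ∧ Nonempty (G ≃* DihedralGroup n) := by
  constructor
  · intro h
    obtain ⟨c, hmem⟩ := exists_forall_mem_zpowers_of_satisfiesIC h
    have sq_of_not_lt (g : G) (hg : ¬ 2 < orderOf g) : g ^ 2 = 1 :=
      (sq_eq_one_iff_orderOf_le_two (isOfFinOrder_of_finite g)).2 (not_lt.1 hg)
    by_cases hc : c ^ 2 = 1
    · refine .inl fun g => sq_of_not_lt g fun hg => hg.not_ge ?_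
      exact Nat.le_of_dvd two_pos ((orderOf_dvd_of_mem_zpowers (hmem g hg)).trans
        (orderOf_dvd_of_pow_eq_one hc))
    · right
      rcases isCyclic_or_nonempty_mulEquiv_dihedralGroup hc
        fun g hg => sq_of_not_lt g (mt (hmem g) hg) with hcyc | hdih
      · exact .inl ⟨hcyc, satisfiesIC_iff_divisorsGTTwoChain_card.1 h⟩
      · exact .inr ⟨orderOf c, (satisfiesIC_iff_divisorsGTTwoChain_orderOf
          (isOfFinOrder_of_finite c) hmem).1 h, hdih⟩
  · rintro (hsq | ⟨hcyc, h⟩ | ⟨n, h, ⟨e⟩⟩)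
    · exact satisfiesIC_of_forall_sq_eq_one hsq
    · exact satisfiesIC_iff_divisorsGTTwoChain_card.2 h
    · have : NeZero n := ⟨by rintro rfl; exact not_divisorsGTTwoChain_zero h⟩
      exact (satisfiesIC_congr e).2 (satisfiesIC_dihedralGroup_iff.2 h)

/-- A finite group satisfies the intersection condition iff it is cyclic of prime
power order, an elementary abelian 2-group, a dihedral 2-group, cyclic of order
`2p`, or dihedral of order `2pⁿ` or `4p`, where `p` is an odd prime. -/
theorem satisfiesIC_iff (G : Type*) [Group G] [Finite G] :
    satisfiesIC G ↔
      ((IsCyclic G ∧ ∃ p n : ℕ, p.Prime ∧ Nat.card G = p ^ n) ∨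
        (∀ g : G, g ^ 2 = 1) ∨
        (∃ n : ℕ, Nonempty (G ≃* DihedralGroup (2 ^ n))) ∨
        (IsCyclic G ∧ ∃ p : ℕ, p.Prime ∧ Odd p ∧ Nat.card G = 2 * p) ∨
        (∃ p n : ℕ, p.Prime ∧ Odd p ∧ 1 ≤ n ∧
          Nonempty (G ≃* DihedralGroup (p ^ n))) ∨
        (∃ p : ℕ, p.Prime ∧ Odd p ∧ Nonempty (G ≃* DihedralGroup (2 * p)))) := by
  simp only [satisfiesIC_iff_divisorsGTTwoChain, divisorsGTTwoChain_iff]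
  constructor
  · rintro (hsq | ⟨hcyc, h | h⟩ | ⟨_, ⟨p, k, hp, rfl⟩ | ⟨p, hp, hodd, rfl⟩, e⟩)
    · exact .inr (.inl hsq)
    · exact .inl ⟨hcyc, h⟩
    · exact .inr (.inr (.inr (.inl ⟨hcyc, h⟩)))
    · obtain rfl | hk := k.eq_zero_or_pos
      · exact .inr (.inr (.inl ⟨0, e⟩))
      obtain rfl | hodd := hp.eq_two_or_odd'
      · exact .inr (.inr (.inl ⟨k, e⟩))
      · exact .inr (.inr (.inr (.inr (.inl ⟨p, k, hp, hodd, hk, e⟩))))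
    · exact .inr (.inr (.inr (.inr (.inr ⟨p, hp, hodd, e⟩))))
  · rintro (⟨hcyc, h⟩ | hsq | ⟨n, e⟩ | ⟨hcyc, h⟩ | ⟨p, n, hp, -, -, e⟩ | ⟨p, hp, hodd, e⟩)
    · exact .inr (.inl ⟨hcyc, .inl h⟩)
    · exact .inl hsq
    · exact .inr (.inr ⟨_, .inl ⟨2, n, Nat.prime_two, rfl⟩, e⟩)
    · exact .inr (.inl ⟨hcyc, .inr h⟩)
    · exact .inr (.inr ⟨_, .inl ⟨p, n, hp, rfl⟩, e⟩)
    · exact .inr (.inr ⟨_, .inr ⟨p, hp, hodd, rfl⟩, e⟩)
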